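/- Let λ > 0 and 0 < σ < 1. The integrals defining K_σ^λ(x,y) and B_σ^λ(x) converge absolutely for all x, y > 0 with x ≠ y, and there exists a constant C = C(λ, σ) > 0 such that: (a) 0 ≤ K_σ^λ(x,y) ≤ C |x−y|^{−1−2σ} for all x, y > 0 with x ≠ y; (b) |B_σ^λ(x)| ≤ C x^{−2σ} for all x > 0; (c) the function B_σ^λ is continuous on ℝ₊. -/

import Mathlib

open Real MeasureTheory Set Filter

noncomputable section

/-- The modified Bessel function of the first kind `I_ν(z)`. -/
def besselI (ν z : ℝ) : ℝ :=
  ∑' k : ℕ, (z / 2) ^ (2 * (k : ℝ) + ν) / ((Nat.factorial k : ℝ) * Real.Gamma ((k : ℝ) + ν + 1))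

/-- The Bessel heat kernel `W_t^λ(x,y)`. -/
def besselHeatKernel (lam t x y : ℝ) : ℝ :=
  Real.sqrt (x * y) / (2 * t) * besselI (lam - 1 / 2) (x * y / (2 * t)) *
    Real.exp (-(x ^ 2 + y ^ 2) / (4 * t))

/-- The Bessel–Poisson kernel `P_t^λ(x,y)`, obtained by subordination. -/
def besselPoissonKernel (lam t x y : ℝ) : ℝ :=
  t / (2 * Real.sqrt Real.pi) *
    ∫ s in Set.Ioi (0 : ℝ),
      s ^ (-(3 : ℝ) / 2) * Real.exp (-t ^ 2 / (4 * s)) * besselHeatKernel lam s x y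

/-- The Bessel heat semigroup `W_t^λ u (x)`. -/
def heatSemigroup (lam : ℝ) (u : ℝ → ℝ) (t x : ℝ) : ℝ :=
  ∫ y in Set.Ioi (0 : ℝ), besselHeatKernel lam t x y * u y

/-- The Bessel–Poisson semigroup `P_t^λ f (x)`. -/
def poissonSemigroup (lam : ℝ) (f : ℝ → ℝ) (t x : ℝ) : ℝ :=
  ∫ y in Set.Ioi (0 : ℝ), besselPoissonKernel lam t x y * f y

/-- The set of Hölder quotients of `f` on `(0,∞)`. -/
def holderRatioSet (α : ℝ) (f : ℝ → ℝ) : Set ℝ :=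
  {r | ∃ x y : ℝ, 0 < x ∧ 0 < y ∧ x ≠ y ∧ r = |f x - f y| / |x - y| ^ α}

/-- The set of growth quotients `|f x|/x^α` of `f` on `(0,∞)`. -/
def growthRatioSet (α : ℝ) (f : ℝ → ℝ) : Set ℝ :=
  {r | ∃ x : ℝ, 0 < x ∧ r = |f x| / x ^ α}

/-- Membership in the Hölder space `C^α_+` (equal to `Lip_+` when `α = 1`). -/
def MemHolderPlus (α : ℝ) (f : ℝ → ℝ) : Prop :=
  ContinuousOn f (Set.Ioi 0) ∧ BddAbove (holderRatioSet α f) ∧ BddAbove (growthRatioSet α f)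

/-- The `C^α_+` norm. -/
def holderPlusNorm (α : ℝ) (f : ℝ → ℝ) : ℝ :=
  sSup (holderRatioSet α f) + sSup (growthRatioSet α f)

/-- `Γ(-σ)`, written through the functional equation `Γ(-σ) = Γ(2-σ)/((-σ)(1-σ))`. -/
def gammaNeg (σ : ℝ) : ℝ := Real.Gamma (2 - σ) / (-σ * (1 - σ))

/-- The kernel `K_σ^λ(x,y)`. -/
def fracKernelK (lam σ x y : ℝ) : ℝ :=
  1 / (-gammaNeg σ) * ∫ t in Set.Ioi (0 : ℝ), besselHeatKernel lam t x y * t ^ (-1 - σ)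

/-- `W_t^λ 1 (x)`. -/
def heatOne (lam t x : ℝ) : ℝ := ∫ y in Set.Ioi (0 : ℝ), besselHeatKernel lam t x y

/-- The function `B_σ^λ(x)`. -/
def fracFunB (lam σ x : ℝ) : ℝ :=
  1 / gammaNeg σ * ∫ t in Set.Ioi (0 : ℝ), (heatOne lam t x - 1) * t ^ (-1 - σ)

/-- The integer `m` with `m - 1 ≤ β < m`. -/
def fracOrder (β : ℝ) : ℕ := Nat.floor β + 1

/-- The Segovia–Wheeden fractional derivative `∂_t^β F(t)`, a complex number. -/
def fracDeriv (β : ℝ) (F : ℝ → ℝ) (t : ℝ) : ℂ :=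
  Complex.exp (-(Real.pi * ((fracOrder β : ℝ) - β)) * Complex.I) /
      Complex.ofReal (Real.Gamma ((fracOrder β : ℝ) - β)) *
    Complex.ofReal
      (∫ s in Set.Ioi (0 : ℝ),
        iteratedDeriv (fracOrder β) F (t + s) * s ^ ((fracOrder β : ℝ) - β - 1))

theorem integrableOn_beta {a b : ℝ} (ha : 0 < a) (hb : 0 < b) :
    IntegrableOn (fun u : ℝ => u ^ (a - 1) * (1 - u) ^ (b - 1)) (Ioo 0 1) := by
  have h := (Complex.betaIntegral_convergent (u := a) (v := b) (by simpa) (by simpa)).1.re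
  have h2 : IntegrableOn (fun u : ℝ => u ^ (a - 1) * (1 - u) ^ (b - 1)) (Ioc 0 1) := by
    refine IntegrableOn.congr_fun h (fun u hu => ?_) measurableSet_Ioc
    have h1 : 0 ≤ 1 - u := sub_nonneg.2 hu.2
    have e1 : ((u : ℂ)) ^ ((a : ℂ) - 1) = ((u ^ (a - 1) : ℝ) : ℂ) := by
      rw [Complex.ofReal_cpow hu.1.le]; push_cast; rfl
    have e2 : (1 - (u : ℂ)) ^ ((b : ℂ) - 1) = (((1 - u) ^ (b - 1) : ℝ) : ℂ) := by
      rw [Complex.ofReal_cpow h1]; push_cast; rfl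
    simp only [e1, e2, ← Complex.ofReal_mul]
    exact Complex.ofReal_re _
  exact h2.mono_set Ioo_subset_Ioc_self

theorem integral_beta {a b : ℝ} (ha : 0 < a) (hb : 0 < b) :
    ∫ u in Ioo (0 : ℝ) 1, u ^ (a - 1) * (1 - u) ^ (b - 1) =
      Gamma a * Gamma b / Gamma (a + b) := by
  have h : ((∫ u in Ioo (0 : ℝ) 1, u ^ (a - 1) * (1 - u) ^ (b - 1) : ℝ) : ℂ) =
      Complex.betaIntegral a b := by
    rw [Complex.betaIntegral, intervalIntegral.integral_of_le zero_le_one,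
      ← integral_Ioc_eq_integral_Ioo, ← integral_complex_ofReal]
    refine setIntegral_congr_fun measurableSet_Ioc fun u hu => ?_
    have h1 : 0 ≤ 1 - u := sub_nonneg.2 hu.2
    simp only [Complex.ofReal_mul, Complex.ofReal_cpow hu.1.le, Complex.ofReal_cpow h1]
    push_cast
    rfl
  have h2 := ProbabilityTheory.beta_eq_betaIntegralReal a b ha hb
  rw [← h, Complex.ofReal_re] at h2
  exact h2.symm

/-- Termwise integration of a power series with nonnegative coefficients against a beta weight. -/
theorem hasSum_integral_beta_mul {a b : ℝ} (ha : 0 < a) (hb : 0 < b) {c : ℕ → ℝ}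
    (hc : ∀ k, 0 ≤ c k) {f : ℝ → ℝ} (hf : Continuous f)
    (h : ∀ v ∈ Ioo (0 : ℝ) 1, HasSum (fun k => c k * v ^ k) (f v)) :
    HasSum (fun k : ℕ => c k * (Gamma a * Gamma (k + b) / Gamma (a + (k + b))))
      (∫ u in Ioo (0 : ℝ) 1, u ^ (a - 1) * (1 - u) ^ (b - 1) * f (1 - u)) := by
  set F : ℕ → ℝ → ℝ := fun k u => u ^ (a - 1) * (1 - u) ^ (b - 1) * (c k * (1 - u) ^ k) with hF
  have hmem : ∀ u ∈ Ioo (0 : ℝ) 1, 1 - u ∈ Ioo (0 : ℝ) 1 :=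
    fun u hu => ⟨by linarith [hu.2], by linarith [hu.1]⟩
  have hsum : ∀ u ∈ Ioo (0 : ℝ) 1,
      HasSum (fun k => F k u) (u ^ (a - 1) * (1 - u) ^ (b - 1) * f (1 - u)) :=
    fun u hu => (h _ (hmem u hu)).mul_left _
  have hint : IntegrableOn (fun u : ℝ => u ^ (a - 1) * (1 - u) ^ (b - 1) * f (1 - u))
      (Ioo 0 1) := by
    obtain ⟨M, hM⟩ := (isCompact_Icc (a := (0 : ℝ)) (b := 1)).exists_bound_of_continuousOn
      (f := fun u => f (1 - u)) (by fun_prop)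
    refine Integrable.mul_bdd (c := M) (integrableOn_beta ha hb)
      (by fun_prop) ?_
    filter_upwards [ae_restrict_mem measurableSet_Ioo] with u hu
    exact hM u (Ioo_subset_Icc_self hu)
  have key := hasSum_integral_of_dominated_convergence (μ := volume.restrict (Ioo (0 : ℝ) 1))
    (F := F) (f := fun u => u ^ (a - 1) * (1 - u) ^ (b - 1) * f (1 - u)) F
    (fun k => by simp only [hF]; exact Measurable.aestronglyMeasurable (by fun_prop))
    (fun k => by
      filter_upwards [ae_restrict_mem measurableSet_Ioo] with u hu
      have h1 := (hmem u hu).1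
      have h0 := hu.1
      rw [norm_of_nonneg]
      have := hc k
      positivity)
    (by
      filter_upwards [ae_restrict_mem measurableSet_Ioo] with u hu
      exact (hsum u hu).summable)
    (IntegrableOn.congr_fun hint (fun u hu => (hsum u hu).tsum_eq.symm) measurableSet_Ioo)
    (by
      filter_upwards [ae_restrict_mem measurableSet_Ioo] with u hu
      exact hsum u hu)
  refine key.congr_fun fun k => ?_
  rw [← integral_beta ha (by positivity), ← integral_const_mul]
  refine setIntegral_congr_fun measurableSet_Ioo fun u hu => ?_
  have h1 := (hmem u hu).1
  simp only [hF]
  rw [show (k : ℝ) + b - 1 = (b - 1) + k by ring, rpow_add h1, rpow_natCast]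
  ring

/-- The incomplete Laplace transform of a beta weight. -/
def betaLaplace (a b w : ℝ) : ℝ :=
  ∫ u in Ioo (0 : ℝ) 1, u ^ (a - 1) * (1 - u) ^ (b - 1) * exp (-w * u)

theorem integrableOn_betaLaplace {a b w : ℝ} (ha : 0 < a) (hb : 0 < b) (hw : 0 ≤ w) :
    IntegrableOn (fun u : ℝ => u ^ (a - 1) * (1 - u) ^ (b - 1) * exp (-w * u)) (Ioo 0 1) := by
  refine Integrable.mul_bdd (c := 1) (integrableOn_beta ha hb) (by fun_prop) ?_
  filter_upwards [ae_restrict_mem measurableSet_Ioo] with u hu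
  rw [norm_of_nonneg (exp_pos _).le, exp_le_one_iff]
  nlinarith [hu.1]

theorem betaLaplace_nonneg (a b w : ℝ) : 0 ≤ betaLaplace a b w := by
  refine setIntegral_nonneg measurableSet_Ioo fun u hu => ?_
  have h1 : 0 < 1 - u := by linarith [hu.2]
  have h0 := hu.1
  positivity

theorem measurable_betaLaplace (a b : ℝ) : Measurable (betaLaplace a b) := by
  have h : StronglyMeasurable (fun q : ℝ × ℝ =>
      q.2 ^ (a - 1) * (1 - q.2) ^ (b - 1) * exp (-q.1 * q.2)) :=
    Measurable.stronglyMeasurable (by fun_prop)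
  exact (h.integral_prod_right' (ν := volume.restrict (Ioo (0 : ℝ) 1))).measurable

theorem abs_rpow_sub_one_le {β u : ℝ} (hβ : -1 < β) (hu : u ∈ Ioo (0 : ℝ) 1) :
    |(1 - u) ^ β - 1| ≤ (4 + 4 * |β|) * (u + u ^ 2 * (1 - u) ^ β) := by
  have hv : 0 < 1 - u := by linarith [hu.2]
  have hv1 : 1 - u ≤ 1 := by linarith [hu.1]
  have hu0 := hu.1
  have hp : 0 < (1 - u) ^ β := rpow_pos_of_pos hv β
  rcases le_or_gt 0 β with h0 | h0
  · have h1 : (1 - u) ^ β ≤ 1 := rpow_le_one hv.le hv1 h0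
    have h2 : 1 - (1 - u) ^ β ≤ (1 + β) * u := by
      have h3 : (1 - u) ^ (1 + β) ≤ (1 - u) ^ β :=
        rpow_le_rpow_of_exponent_ge hv hv1 (by linarith)
      have h4 := one_add_mul_self_le_rpow_one_add (s := -u) (by linarith) (p := 1 + β)
        (by linarith)
      rw [← sub_eq_add_neg] at h4
      linarith
    rw [abs_sub_comm, abs_of_nonneg (by linarith), abs_of_nonneg h0]
    have : 0 ≤ u ^ 2 * (1 - u) ^ β := by positivity
    nlinarith [mul_nonneg h0 this, mul_nonneg h0 hu0.le]
  · have h1 : 1 ≤ (1 - u) ^ β := one_le_rpow_of_pos_of_le_one_of_nonpos hv hv1 h0.le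
    have h2 : (1 - u) ≤ (1 - u) ^ (-β) := by
      simpa using rpow_le_rpow_of_exponent_ge hv hv1 (show -β ≤ 1 by linarith)
    have h3 : (1 - u) ^ β * (1 - u) ^ (-β) = 1 := by
      rw [← rpow_add hv]; simp
    have h4 : (1 - u) ^ β - 1 ≤ u * (1 - u) ^ β := by
      nlinarith
    have h5 : u * (1 - u) ^ β ≤ 4 * (u + u ^ 2 * (1 - u) ^ β) := by
      rcases le_or_gt u (1 / 2) with hle | hgt
      · have h6 : (1 - u) ^ β ≤ 2 := by nlinarith
        have : 0 ≤ u ^ 2 * (1 - u) ^ β := by positivity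
        nlinarith
      · have : 0 ≤ u * (1 - u) ^ β := by positivity
        nlinarith
    rw [abs_of_nonneg (by linarith)]
    have : 0 ≤ u + u ^ 2 * (1 - u) ^ β := by positivity
    nlinarith [mul_nonneg (abs_nonneg β) this]

theorem exists_rpow_le_mul_exp {q : ℝ} (hq : 0 ≤ q) :
    ∃ C : ℝ, 0 < C ∧ ∀ s : ℝ, 0 ≤ s → s ^ q ≤ C * exp s := by
  refine ⟨1 + (⌈q⌉₊.factorial : ℝ), by positivity, fun s hs => ?_⟩
  have h1 : s ^ q ≤ 1 + s ^ ⌈q⌉₊ := by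
    rcases le_or_gt s 1 with h | h
    · have := rpow_le_one hs h hq
      have : 0 ≤ s ^ ⌈q⌉₊ := by positivity
      linarith
    · have := rpow_le_rpow_of_exponent_le h.le (Nat.le_ceil q)
      rw [rpow_natCast] at this
      linarith
  have h2 := pow_div_factorial_le_exp s hs ⌈q⌉₊
  rw [div_le_iff₀ (by positivity)] at h2
  have h3 := one_le_exp hs
  linarith

/-- Watson's lemma with an explicit remainder for the Laplace transform of a beta weight. -/
theorem exists_abs_betaLaplace_sub_one_le {a b : ℝ} (ha : 0 < a) (hb : 0 < b) :
    ∃ M : ℝ, 0 < M ∧ ∀ w : ℝ, 0 < w →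
      |w ^ a / Gamma a * betaLaplace a b w - 1| ≤ M ∧
      |w ^ a / Gamma a * betaLaplace a b w - 1| ≤ M / w := by
  obtain ⟨C, hC, hCexp⟩ := exists_rpow_le_mul_exp (q := a + 1) (by linarith)
  have hΓ := Gamma_pos_of_pos ha
  have hΓ1 := Gamma_pos_of_pos (show 0 < a + 1 by linarith)
  set A : ℝ := 4 + 4 * |b - 1| with hA
  have hA1 : 1 ≤ A := by rw [hA]; linarith [abs_nonneg (b - 1)]
  set B : ℝ := ∫ u in Ioo (0 : ℝ) 1, u ^ ((1 : ℝ) - 1) * (1 - u) ^ (b - 1) with hB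
  have hB0 : 0 ≤ B := by
    rw [hB, integral_beta one_pos hb]
    have := Gamma_pos_of_pos hb
    have := Gamma_pos_of_pos (show 0 < 1 + b by linarith)
    have := Gamma_pos_of_pos one_pos
    positivity
  set D : ℝ := A * (Gamma (a + 1) + C * B) / Gamma a with hD
  have hD0 : 0 < D := by positivity
  set E : ℝ := betaLaplace a b 0 / Gamma a with hE
  have hE0 : 0 ≤ E := div_nonneg (betaLaplace_nonneg _ _ _) hΓ.le
  have hlarge : ∀ w : ℝ, 0 < w → |w ^ a / Gamma a * betaLaplace a b w - 1| ≤ D / w := by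
    intro w hw
    have hintΓ : ∀ {s : ℝ}, 0 < s →
        IntegrableOn (fun u : ℝ => u ^ (s - 1) * exp (-w * u)) (Ioi 0) := fun {s} hs => by
      simpa using integrableOn_rpow_mul_exp_neg_mul_rpow (show -1 < s - 1 by linarith) one_pos hw
    have hvalΓ : ∀ {s : ℝ}, 0 < s →
        ∫ u in Ioi (0 : ℝ), u ^ (s - 1) * exp (-w * u) = Gamma s / w ^ s := fun {s} hs => by
      have := integral_rpow_mul_exp_neg_mul_Ioi hs hw
      simp only [neg_mul]
      rw [this, one_div, inv_rpow hw.le]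
      field_simp
    have hsplit : Ioi (0 : ℝ) = Ioo 0 1 ∪ Ici 1 := (Ioo_union_Ici_eq_Ioi one_pos).symm
    have hdisj : Disjoint (Ioo (0 : ℝ) 1) (Ici 1) :=
      Set.disjoint_left.2 fun u hu hu' => absurd hu.2 (not_lt.2 hu')
    have hIoo : Ioo (0 : ℝ) 1 ⊆ Ioi 0 := Ioo_subset_Ioi_self
    have hIci : Ici (1 : ℝ) ⊆ Ioi 0 := fun u hu => mem_Ioi.2 (one_pos.trans_le hu)
    have ha1 : 0 < a + 1 := by linarith
    have sp : ∀ {s : ℝ}, 0 < s → ∫ u in Ioi (0 : ℝ), u ^ (s - 1) * exp (-w * u) =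
        (∫ u in Ioo (0 : ℝ) 1, u ^ (s - 1) * exp (-w * u)) +
          ∫ u in Ici (1 : ℝ), u ^ (s - 1) * exp (-w * u) := fun {s} hs => by
      rw [hsplit, setIntegral_union hdisj measurableSet_Ici ((hintΓ hs).mono_set hIoo)
        ((hintΓ hs).mono_set hIci)]
    have hL := integrableOn_betaLaplace ha hb hw.le
    have hdiff : betaLaplace a b w - ∫ u in Ioo (0 : ℝ) 1, u ^ (a - 1) * exp (-w * u) =
        ∫ u in Ioo (0 : ℝ) 1, (u ^ (a - 1) * (1 - u) ^ (b - 1) * exp (-w * u) -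
          u ^ (a - 1) * exp (-w * u)) :=
      (integral_sub hL ((hintΓ ha).mono_set hIoo)).symm
    have hBint : IntegrableOn (fun u : ℝ => u ^ ((1 : ℝ) - 1) * (1 - u) ^ (b - 1)) (Ioo 0 1) :=
      integrableOn_beta one_pos hb
    have hI1 : IntegrableOn (fun u : ℝ => A * (u ^ (a + 1 - 1) * exp (-w * u)) +
        A * (C / w ^ (a + 1)) * (u ^ ((1 : ℝ) - 1) * (1 - u) ^ (b - 1))) (Ioo 0 1) :=
      (((hintΓ ha1).mono_set hIoo).const_mul A).add (hBint.const_mul _)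
    have hpart : |∫ u in Ioo (0 : ℝ) 1, (u ^ (a - 1) * (1 - u) ^ (b - 1) * exp (-w * u) -
          u ^ (a - 1) * exp (-w * u))| ≤
        A * (∫ u in Ioo (0 : ℝ) 1, u ^ (a + 1 - 1) * exp (-w * u)) +
          A * (C / w ^ (a + 1)) * B := by
      rw [hB, ← integral_const_mul, ← integral_const_mul, ← integral_add
        (((hintΓ ha1).mono_set hIoo).const_mul A) (hBint.const_mul _), ← norm_eq_abs]
      refine norm_integral_le_of_norm_le hI1 ?_
      filter_upwards [ae_restrict_mem measurableSet_Ioo] with u hu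
      have hu0 := hu.1
      have hv : 0 < 1 - u := by linarith [hu.2]
      have e1 : u ^ (a + 1 - 1) = u ^ (a - 1) * u := by
        rw [show a + 1 - 1 = (a - 1) + 1 by ring, rpow_add hu0, rpow_one]
      have e2 : u ^ (a + 1) = u ^ (a - 1) * u ^ 2 := by
        rw [show a + 1 = (a - 1) + 2 by ring, rpow_add hu0, rpow_two]
      have h1 := abs_rpow_sub_one_le (β := b - 1) (by linarith) hu
      have h2 : u ^ (a + 1) * exp (-w * u) ≤ C / w ^ (a + 1) := by
        have h3 := hCexp (w * u) (by positivity)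
        rw [mul_rpow hw.le hu0.le] at h3
        rw [le_div_iff₀ (by positivity), neg_mul, exp_neg]
        have := exp_pos (w * u)
        field_simp
        linarith
      rw [show u ^ (a - 1) * (1 - u) ^ (b - 1) * exp (-w * u) - u ^ (a - 1) * exp (-w * u) =
        u ^ (a - 1) * exp (-w * u) * ((1 - u) ^ (b - 1) - 1) by ring, norm_mul,
        norm_of_nonneg (by positivity), norm_eq_abs]
      calc u ^ (a - 1) * exp (-w * u) * |(1 - u) ^ (b - 1) - 1|
          ≤ u ^ (a - 1) * exp (-w * u) * (A * (u + u ^ 2 * (1 - u) ^ (b - 1))) := by gcongr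
        _ = A * (u ^ (a + 1 - 1) * exp (-w * u)) +
            A * (u ^ (a + 1) * exp (-w * u)) * (1 - u) ^ (b - 1) := by rw [e1, e2]; ring
        _ ≤ A * (u ^ (a + 1 - 1) * exp (-w * u)) +
            A * (C / w ^ (a + 1)) * (1 - u) ^ (b - 1) := by gcongr
        _ = _ := by simp
    have htail0 : 0 ≤ ∫ u in Ici (1 : ℝ), u ^ (a - 1) * exp (-w * u) :=
      setIntegral_nonneg measurableSet_Ici fun u hu => by
        have : 0 < u := hIci hu
        positivity
    have htail : ∫ u in Ici (1 : ℝ), u ^ (a - 1) * exp (-w * u) ≤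
        A * ∫ u in Ici (1 : ℝ), u ^ (a + 1 - 1) * exp (-w * u) := by
      rw [← integral_const_mul]
      refine setIntegral_mono_on ((hintΓ ha).mono_set hIci)
        (((hintΓ ha1).mono_set hIci).const_mul A) measurableSet_Ici fun u hu => ?_
      have h0 : 0 < u := hIci hu
      have h1 : u ^ (a - 1) ≤ u ^ (a + 1 - 1) :=
        rpow_le_rpow_of_exponent_le hu (by linarith)
      calc u ^ (a - 1) * exp (-w * u) ≤ u ^ (a + 1 - 1) * exp (-w * u) := by gcongr
        _ ≤ A * (u ^ (a + 1 - 1) * exp (-w * u)) := le_mul_of_one_le_left (by positivity) hA1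
    have hmain : |betaLaplace a b w - Gamma a / w ^ a| ≤
        A * (Gamma (a + 1) / w ^ (a + 1)) + A * (C / w ^ (a + 1)) * B := by
      rw [← hvalΓ ha, ← hvalΓ ha1, sp ha, sp ha1]
      rw [← hdiff] at hpart
      rw [abs_le] at hpart ⊢
      constructor <;> nlinarith [hpart.1, hpart.2]
    have e : w ^ a / Gamma a * betaLaplace a b w - 1 =
        w ^ a / Gamma a * (betaLaplace a b w - Gamma a / w ^ a) := by
      have : 0 < w ^ a := by positivity
      field_simp
    rw [e, abs_mul, abs_of_nonneg (by positivity)]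
    calc w ^ a / Gamma a * |betaLaplace a b w - Gamma a / w ^ a|
        ≤ w ^ a / Gamma a *
          (A * (Gamma (a + 1) / w ^ (a + 1)) + A * (C / w ^ (a + 1)) * B) := by gcongr
      _ = D / w := by
        have : 0 < w ^ a := by positivity
        rw [hD, rpow_add hw, rpow_one]
        field_simp
  refine ⟨D + E + 1, by positivity, fun w hw => ⟨?_, (hlarge w hw).trans (by gcongr; linarith)⟩⟩
  rcases le_or_gt w 1 with h1 | h1
  · have hw1 : w ^ a ≤ 1 := rpow_le_one hw.le h1 ha.le
    have hmono : betaLaplace a b w ≤ betaLaplace a b 0 := by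
      refine setIntegral_mono_on (integrableOn_betaLaplace ha hb hw.le)
        (integrableOn_betaLaplace ha hb le_rfl) measurableSet_Ioo fun u hu => ?_
      have hu0 := hu.1
      have hv : 0 < 1 - u := by linarith [hu.2]
      have : -w * u ≤ -0 * u := by nlinarith
      gcongr
    have h0 := betaLaplace_nonneg a b w
    have hle : w ^ a / Gamma a * betaLaplace a b w ≤ E := by
      calc w ^ a / Gamma a * betaLaplace a b w ≤ 1 / Gamma a * betaLaplace a b 0 := by gcongr
        _ = E := by rw [hE]; ring
    have hge : 0 ≤ w ^ a / Gamma a * betaLaplace a b w := by positivity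
    rw [abs_le]
    constructor <;> linarith
  · refine (hlarge w hw).trans ?_
    rw [div_le_iff₀ hw]
    nlinarith

theorem Gamma_nat_add_half_mul (k : ℕ) :
    Gamma (k + 1 / 2) * (4 ^ k * k.factorial) = (2 * k).factorial * √π := by
  induction k with
  | zero => simpa using Gamma_one_half_eq
  | succ k ih =>
    have h : Gamma (((k + 1 : ℕ) : ℝ) + 1 / 2) = (k + 1 / 2) * Gamma (k + 1 / 2) := by
      rw [← Gamma_add_one (by positivity)]; push_cast; ring_nf
    rw [h, show 2 * (k + 1) = (2 * k + 1) + 1 by ring, Nat.factorial_succ, Nat.factorial_succ,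
      Nat.factorial_succ, pow_succ]
    push_cast
    linear_combination (4 * (k + 1 / 2) * (k + 1) : ℝ) * ih

/-- The integral appearing in Poisson's representation of the modified Bessel function. -/
def besselPoissonIntegral (lam z : ℝ) : ℝ :=
  ∫ u in Ioo (0 : ℝ) 1, u ^ (lam - 1) * (1 - u) ^ ((1 / 2 : ℝ) - 1) * cosh (z * √(1 - u))

theorem measurable_besselPoissonIntegral (lam : ℝ) : Measurable (besselPoissonIntegral lam) := by
  have h : StronglyMeasurable (fun q : ℝ × ℝ =>
      q.2 ^ (lam - 1) * (1 - q.2) ^ ((1 / 2 : ℝ) - 1) * cosh (q.1 * √(1 - q.2))) :=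
    Measurable.stronglyMeasurable (by fun_prop)
  exact (h.integral_prod_right' (ν := volume.restrict (Ioo (0 : ℝ) 1))).measurable

/-- Poisson's integral representation of the modified Bessel function. -/
theorem besselI_eq_besselPoissonIntegral {lam z : ℝ} (hlam : 0 < lam) (hz : 0 < z) :
    besselI (lam - 1 / 2) z =
      (z / 2) ^ (lam - 1 / 2) / (√π * Gamma lam) * besselPoissonIntegral lam z := by
  have hs := hasSum_integral_beta_mul (a := lam) (b := 1 / 2) hlam (by norm_num)
    (c := fun k => z ^ (2 * k) / (2 * k).factorial) (fun k => by positivity)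
    (f := fun v => cosh (z * √v)) (by fun_prop) (fun v hv => by
      have := hasSum_cosh (z * √v)
      refine this.congr_fun fun k => ?_
      rw [mul_pow, pow_mul √v 2 k, sq_sqrt hv.1.le]
      ring)
  have hs2 := hs.mul_left ((z / 2) ^ (lam - 1 / 2) / (√π * Gamma lam))
  rw [besselPoissonIntegral, ← hs2.tsum_eq, besselI]
  congr 1
  ext k
  have h1 := Gamma_nat_add_half_mul k
  have hG := Gamma_pos_of_pos hlam
  have hG2 := Gamma_pos_of_pos (show 0 < lam + ((k : ℝ) + 1 / 2) by positivity)
  have hπ : 0 < √π := by positivity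
  rw [show (k : ℝ) + (lam - 1 / 2) + 1 = lam + (k + 1 / 2) by ring,
    rpow_add (by positivity), show 2 * (k : ℝ) = ((2 * k : ℕ) : ℝ) by push_cast; ring,
    rpow_natCast, eq_div_of_mul_eq (by positivity) h1, div_pow, pow_mul 2 2 k]
  have : ((2 * k).factorial : ℝ) ≠ 0 := by positivity
  norm_num
  field_simp

theorem exists_sqrt_mul_exp_mul_besselI_le {lam : ℝ} (hlam : 0 < lam) :
    ∃ C : ℝ, 0 < C ∧ ∀ z : ℝ, 0 < z →
      √z * exp (-z) * besselI (lam - 1 / 2) z ≤ C := by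
  obtain ⟨M, hM, hbd⟩ := exists_abs_betaLaplace_sub_one_le hlam (b := 1 / 2) (by norm_num)
  have hG := Gamma_pos_of_pos hlam
  have hπ : 0 < √π := by positivity
  refine ⟨(M + 1) * 2 ^ lam * (2 ^ (lam - 1 / 2))⁻¹ / √π, by positivity, fun z hz => ?_⟩
  have hle : exp (-z) * besselPoissonIntegral lam z ≤ betaLaplace lam (1 / 2) (z / 2) := by
    rw [besselPoissonIntegral, betaLaplace, ← integral_const_mul]
    refine integral_mono_of_nonneg ?_
      (integrableOn_betaLaplace hlam (by norm_num) (by positivity)) ?_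
    · filter_upwards [ae_restrict_mem measurableSet_Ioo] with u hu
      have hu0 := hu.1
      have hv : 0 < 1 - u := by linarith [hu.2]
      have := cosh_pos (z * √(1 - u))
      simp only [Pi.zero_apply]
      positivity
    · filter_upwards [ae_restrict_mem measurableSet_Ioo] with u hu
      have hu0 := hu.1
      have hv : 0 < 1 - u := by linarith [hu.2]
      have h1 : cosh (z * √(1 - u)) ≤ exp (z * √(1 - u)) := by
        rw [cosh_eq]
        have : exp (-(z * √(1 - u))) ≤ exp (z * √(1 - u)) := by
          apply exp_le_exp.2
          have : 0 ≤ z * √(1 - u) := by positivity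
          linarith
        linarith
      have h2 : √(1 - u) ≤ 1 - u / 2 := by
        rw [sqrt_le_left (by linarith)]
        nlinarith
      have h3 : exp (-z) * cosh (z * √(1 - u)) ≤ exp (-(z / 2) * u) := by
        calc exp (-z) * cosh (z * √(1 - u)) ≤ exp (-z) * exp (z * √(1 - u)) := by gcongr
          _ = exp (-z + z * √(1 - u)) := (exp_add _ _).symm
          _ ≤ _ := exp_le_exp.2 (by nlinarith)
      calc exp (-z) * (u ^ (lam - 1) * (1 - u) ^ ((1 / 2 : ℝ) - 1) * cosh (z * √(1 - u)))
          = u ^ (lam - 1) * (1 - u) ^ ((1 / 2 : ℝ) - 1) *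
            (exp (-z) * cosh (z * √(1 - u))) := by ring
        _ ≤ _ := by gcongr
  have h1 : (z / 2) ^ lam / Gamma lam * betaLaplace lam (1 / 2) (z / 2) ≤ M + 1 := by
    have := (abs_le.1 (hbd (z / 2) (by positivity)).1).2
    linarith
  have hsq : √z * z ^ (lam - 1 / 2) = z ^ lam := by
    rw [sqrt_eq_rpow, ← rpow_add hz]; ring_nf
  have hz2 : (z / 2) ^ lam = z ^ lam / 2 ^ lam := div_rpow hz.le (by norm_num) _
  rw [besselI_eq_besselPoissonIntegral hlam hz, div_rpow hz.le (by norm_num)]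
  calc √z * exp (-z) * (z ^ (lam - 1 / 2) / 2 ^ (lam - 1 / 2) / (√π * Gamma lam) *
        besselPoissonIntegral lam z)
      = (√z * z ^ (lam - 1 / 2)) * (2 ^ (lam - 1 / 2))⁻¹ / (√π * Gamma lam) *
        (exp (-z) * besselPoissonIntegral lam z) := by ring
    _ ≤ (√z * z ^ (lam - 1 / 2)) * (2 ^ (lam - 1 / 2))⁻¹ / (√π * Gamma lam) *
        betaLaplace lam (1 / 2) (z / 2) := by gcongr
    _ = ((z / 2) ^ lam / Gamma lam * betaLaplace lam (1 / 2) (z / 2)) * 2 ^ lam *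
        (2 ^ (lam - 1 / 2))⁻¹ / √π := by rw [hsq, hz2]; field_simp
    _ ≤ _ := by gcongr

theorem besselI_nonneg {ν z : ℝ} (hν : -1 < ν) (hz : 0 ≤ z) : 0 ≤ besselI ν z := by
  refine tsum_nonneg fun k => ?_
  have := Gamma_pos_of_pos (show 0 < (k : ℝ) + ν + 1 by
    have : (0 : ℝ) ≤ k := k.cast_nonneg
    linarith)
  positivity

theorem besselHeatKernel_nonneg {lam t x y : ℝ} (hlam : 0 < lam) (ht : 0 < t) (hx : 0 < x)
    (hy : 0 < y) : 0 ≤ besselHeatKernel lam t x y := by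
  have := besselI_nonneg (ν := lam - 1 / 2) (z := x * y / (2 * t)) (by linarith) (by positivity)
  unfold besselHeatKernel
  positivity

/-- The Gaussian upper bound for the Bessel heat kernel. -/
theorem exists_besselHeatKernel_le {lam : ℝ} (hlam : 0 < lam) :
    ∃ C : ℝ, 0 < C ∧ ∀ t x y : ℝ, 0 < t → 0 < x → 0 < y →
      besselHeatKernel lam t x y ≤ C * (t ^ (-(1 / 2) : ℝ) * exp (-(x - y) ^ 2 / (4 * t))) := by
  obtain ⟨C, hC, hbd⟩ := exists_sqrt_mul_exp_mul_besselI_le hlam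
  refine ⟨C / √2, by positivity, fun t x y ht hx hy => ?_⟩
  have h := hbd (x * y / (2 * t)) (by positivity)
  have e1 : √(x * y) / (2 * t) = √(x * y / (2 * t)) * (t ^ (-(1 / 2) : ℝ) / √2) := by
    have h2 : (0 : ℝ) ≤ 2 := by norm_num
    rw [sqrt_div (by positivity), sqrt_mul h2, rpow_neg ht.le, ← sqrt_eq_rpow]
    have := sq_sqrt ht.le
    have := sq_sqrt h2
    field_simp
    grind
  have e2 : exp (-(x ^ 2 + y ^ 2) / (4 * t)) =
      exp (-(x * y / (2 * t))) * exp (-(x - y) ^ 2 / (4 * t)) := by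
    rw [← exp_add]; congr 1; field_simp; ring
  rw [besselHeatKernel, e1, e2]
  calc _ = (√(x * y / (2 * t)) * exp (-(x * y / (2 * t))) *
          besselI (lam - 1 / 2) (x * y / (2 * t))) *
          (t ^ (-(1 / 2) : ℝ) / √2 * exp (-(x - y) ^ 2 / (4 * t))) := by ring
    _ ≤ C * (t ^ (-(1 / 2) : ℝ) / √2 * exp (-(x - y) ^ 2 / (4 * t))) := by gcongr
    _ = _ := by ring

theorem aestronglyMeasurable_besselHeatKernel {lam x y : ℝ} (hlam : 0 < lam) (hx : 0 < x)
    (hy : 0 < y) :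
    AEStronglyMeasurable (fun t => besselHeatKernel lam t x y)
      (volume.restrict (Ioi (0 : ℝ))) := by
  have hm : Measurable fun t : ℝ => √(x * y) / (2 * t) *
      ((x * y / (2 * t) / 2) ^ (lam - 1 / 2) / (√π * Gamma lam) *
        besselPoissonIntegral lam (x * y / (2 * t))) * exp (-(x ^ 2 + y ^ 2) / (4 * t)) := by
    have := measurable_besselPoissonIntegral lam
    fun_prop
  refine hm.aestronglyMeasurable.congr ?_
  filter_upwards [ae_restrict_mem measurableSet_Ioi] with t ht
  have ht : 0 < t := ht
  rw [besselHeatKernel, besselI_eq_besselPoissonIntegral hlam (by positivity)]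

theorem rpow_mul_exp_neg_inv_eq {σ r t : ℝ} (ht : 0 < t) :
    t ^ (-(1 / 2) : ℝ) * exp (-r / t) * t ^ (-1 - σ) =
      t ^ ((-1 : ℝ) - 1) • ((t ^ (-1 : ℝ)) ^ (σ + 1 / 2 - 1) * exp (-(r * t ^ (-1 : ℝ)))) := by
  rw [smul_eq_mul, ← rpow_mul ht.le, ← mul_assoc, ← rpow_add ht, mul_right_comm, ← rpow_add ht,
    rpow_neg_one]
  congr 2 <;> ring

theorem integrableOn_rpow_mul_exp_neg_inv {σ r : ℝ} (hσ : 0 < σ) (hr : 0 < r) :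
    IntegrableOn (fun t : ℝ => t ^ (-(1 / 2) : ℝ) * exp (-r / t) * t ^ (-1 - σ)) (Ioi 0) := by
  have h : IntegrableOn (fun s : ℝ => s ^ (σ + 1 / 2 - 1) * exp (-(r * s))) (Ioi 0) := by
    simpa using integrableOn_rpow_mul_exp_neg_mul_rpow (s := σ + 1 / 2 - 1) (by linarith)
      one_pos hr
  exact ((integrableOn_Ioi_comp_rpow_iff' _ (by norm_num : (-1 : ℝ) ≠ 0)).2 h).congr_fun
    (fun t ht => (rpow_mul_exp_neg_inv_eq ht).symm) measurableSet_Ioi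

theorem integral_rpow_mul_exp_neg_inv {σ r : ℝ} (hσ : 0 < σ) (hr : 0 < r) :
    ∫ t in Ioi (0 : ℝ), t ^ (-(1 / 2) : ℝ) * exp (-r / t) * t ^ (-1 - σ) =
      (1 / r) ^ (σ + 1 / 2) * Gamma (σ + 1 / 2) := by
  rw [← integral_rpow_mul_exp_neg_mul_Ioi (by linarith) hr,
    ← integral_comp_rpow_Ioi (fun s => s ^ (σ + 1 / 2 - 1) * exp (-(r * s)))
      (by norm_num : (-1 : ℝ) ≠ 0)]
  refine setIntegral_congr_fun measurableSet_Ioi fun t ht => ?_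
  simp only [rpow_mul_exp_neg_inv_eq ht, abs_neg, abs_one, one_mul]

theorem gammaNeg_neg {σ : ℝ} (hσ0 : 0 < σ) (hσ1 : σ < 1) : gammaNeg σ < 0 :=
  div_neg_of_pos_of_neg (Gamma_pos_of_pos (by linarith)) (by nlinarith)

/-- Each term of the Bessel series, as a function of `y`, in Gaussian-moment form. -/
theorem heatKernel_term_eq {lam t x y : ℝ} (ht : 0 < t) (hx : 0 < x) (hy : 0 < y) (k : ℕ) :
    √(x * y) / (2 * t) * ((x * y / (2 * t) / 2) ^ (2 * (k : ℝ) + (lam - 1 / 2)) /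
      (k.factorial * Gamma ((k : ℝ) + (lam - 1 / 2) + 1))) * exp (-(x ^ 2 + y ^ 2) / (4 * t)) =
    (√x / (2 * t) * ((x / (4 * t)) ^ (2 * (k : ℝ) + (lam - 1 / 2)) /
      (k.factorial * Gamma ((k : ℝ) + (lam - 1 / 2) + 1))) * exp (-(x ^ 2 / (4 * t)))) *
      (y ^ (2 * (k : ℝ) + lam) * exp (-(1 / (4 * t)) * y ^ (2 : ℝ))) := by
  have e1 : exp (-(x ^ 2 + y ^ 2) / (4 * t)) =
      exp (-(x ^ 2 / (4 * t))) * exp (-(1 / (4 * t)) * y ^ (2 : ℝ)) := by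
    rw [← exp_add, rpow_two]; congr 1; field_simp; ring
  have e2 : (x * y / (2 * t) / 2) ^ (2 * (k : ℝ) + (lam - 1 / 2)) =
      (x / (4 * t)) ^ (2 * (k : ℝ) + (lam - 1 / 2)) * y ^ (2 * (k : ℝ) + (lam - 1 / 2)) := by
    rw [← mul_rpow (by positivity) hy.le]; congr 1; field_simp; norm_num
  have e3 : y ^ (2 * (k : ℝ) + lam) = √y * y ^ (2 * (k : ℝ) + (lam - 1 / 2)) := by
    rw [sqrt_eq_rpow, ← rpow_add hy]; congr 1; ring
  rw [e1, e2, e3, sqrt_mul hx.le]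
  ring

theorem heatKernel_term_coeff_mul_integral {lam t x : ℝ} (hlam : 0 < lam) (ht : 0 < t)
    (hx : 0 < x) (k : ℕ) :
    (√x / (2 * t) * ((x / (4 * t)) ^ (2 * (k : ℝ) + (lam - 1 / 2)) /
      (k.factorial * Gamma ((k : ℝ) + (lam - 1 / 2) + 1))) * exp (-(x ^ 2 / (4 * t)))) *
      ((1 / (4 * t)) ^ (-(2 * (k : ℝ) + lam + 1) / 2) * (1 / 2) *
        Gamma ((2 * (k : ℝ) + lam + 1) / 2)) =
    (exp (-(x ^ 2 / (4 * t))) * (x ^ 2 / (4 * t)) ^ (lam / 2) / Gamma (lam / 2)) *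
      ((x ^ 2 / (4 * t)) ^ k / k.factorial * (Gamma (lam / 2) * Gamma (k + (lam / 2 + 1 / 2)) /
        Gamma (lam / 2 + (k + (lam / 2 + 1 / 2))))) := by
  have hG := Gamma_pos_of_pos (show 0 < lam / 2 by positivity)
  have hG2 := Gamma_pos_of_pos (show 0 < lam / 2 + ((k : ℝ) + (lam / 2 + 1 / 2)) by positivity)
  obtain ⟨s, hs, rfl⟩ : ∃ s : ℝ, 0 < s ∧ t = s ^ 2 / 4 :=
    ⟨√(4 * t), by positivity, by rw [sq_sqrt (by positivity)]; ring⟩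
  obtain ⟨r, hr, rfl⟩ : ∃ r : ℝ, 0 < r ∧ x = r * s :=
    ⟨x / s, by positivity, by field_simp⟩
  have hT : 4 * (s ^ 2 / 4) = s ^ 2 := by ring
  have h1 : (r * s) ^ 2 / s ^ 2 = r ^ 2 := by field_simp
  have h2 : r * s / s ^ 2 = r / s := by field_simp
  have h3 : (1 / s ^ 2) ^ (-(2 * (k : ℝ) + lam + 1) / 2) = s ^ (2 * (k : ℝ) + lam) * s := by
    rw [one_div, inv_rpow (by positivity), ← rpow_neg (by positivity), ← rpow_two,
      ← rpow_mul hs.le, ← rpow_add_one hs.ne']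
    congr 1; ring
  have h4 : (r ^ 2) ^ (lam / 2) * (r ^ 2) ^ k = r ^ (2 * (k : ℝ) + lam) := by
    rw [← rpow_natCast (r ^ 2) k, ← rpow_add (by positivity), ← rpow_two, ← rpow_mul hr.le]
    congr 1; ring
  have h5 : ∀ q : ℝ, 0 < q → q ^ (2 * (k : ℝ) + (lam - 1 / 2)) * √q = q ^ (2 * (k : ℝ) + lam) :=
    fun q hq => by rw [sqrt_eq_rpow, ← rpow_add hq]; congr 1; ring
  have h6 := h5 r hr
  have h7 := h5 s hs
  have h8 := sq_sqrt hs.le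
  rw [hT, h1, h2, h3, show (k : ℝ) + (lam - 1 / 2) + 1 = lam / 2 + (k + (lam / 2 + 1 / 2)) by ring,
    show (2 * (k : ℝ) + lam + 1) / 2 = k + (lam / 2 + 1 / 2) by ring, div_rpow hr.le hs.le,
    sqrt_mul hr.le, ← h7]
  have h9 : 0 < s ^ (2 * (k : ℝ) + (lam - 1 / 2)) := by positivity
  have key : √r * √s / (2 * (s ^ 2 / 4)) * (r ^ (2 * (k : ℝ) + (lam - 1 / 2)) /
      s ^ (2 * (k : ℝ) + (lam - 1 / 2))) *
      (s ^ (2 * (k : ℝ) + (lam - 1 / 2)) * √s * s * (1 / 2)) =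
      (r ^ 2) ^ (lam / 2) * (r ^ 2) ^ k := by
    rw [h4, ← h6]
    field_simp
    rw [h8]; ring
  calc _ = (√r * √s / (2 * (s ^ 2 / 4)) * (r ^ (2 * (k : ℝ) + (lam - 1 / 2)) /
      s ^ (2 * (k : ℝ) + (lam - 1 / 2))) *
      (s ^ (2 * (k : ℝ) + (lam - 1 / 2)) * √s * s * (1 / 2))) *
      (exp (-r ^ 2) * Gamma (k + (lam / 2 + 1 / 2)) /
        (k.factorial * Gamma (lam / 2 + (k + (lam / 2 + 1 / 2))))) := by ring
    _ = _ := by rw [key]; field_simp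

/-- The heat semigroup applied to `1` is a Laplace transform in the variable `x² / (4t)`. -/
theorem heatOne_eq {lam t x : ℝ} (hlam : 0 < lam) (ht : 0 < t) (hx : 0 < x) :
    heatOne lam t x = (x ^ 2 / (4 * t)) ^ (lam / 2) / Gamma (lam / 2) *
      betaLaplace (lam / 2) (lam / 2 + 1 / 2) (x ^ 2 / (4 * t)) := by
  set w := x ^ 2 / (4 * t) with hw
  have hw0 : 0 < w := by positivity
  have hs := hasSum_integral_beta_mul (a := lam / 2) (b := lam / 2 + 1 / 2) (by positivity)
    (by positivity) (c := fun k => w ^ k / k.factorial) (fun k => by positivity)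
    (f := fun v => exp (w * v)) (by fun_prop) (fun v _ => by
      have h := NormedSpace.expSeries_div_hasSum_exp (w * v)
      rw [← exp_eq_exp_ℝ] at h
      refine h.congr_fun fun k => ?_
      rw [mul_pow]
      ring)
  have hL : ∫ u in Ioo (0 : ℝ) 1, u ^ (lam / 2 - 1) * (1 - u) ^ (lam / 2 + 1 / 2 - 1) *
      exp (w * (1 - u)) = exp w * betaLaplace (lam / 2) (lam / 2 + 1 / 2) w := by
    rw [betaLaplace, ← integral_const_mul]
    refine setIntegral_congr_fun measurableSet_Ioo fun u _ => ?_
    rw [show w * (1 - u) = w + -w * u by ring, exp_add]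
    ring
  rw [hL] at hs
  have hs2 := hs.mul_left (exp (-w) * w ^ (lam / 2) / Gamma (lam / 2))
  set F : ℕ → ℝ → ℝ := fun k y =>
    √(x * y) / (2 * t) * ((x * y / (2 * t) / 2) ^ (2 * (k : ℝ) + (lam - 1 / 2)) /
      (k.factorial * Gamma ((k : ℝ) + (lam - 1 / 2) + 1))) *
      exp (-(x ^ 2 + y ^ 2) / (4 * t)) with hF
  have hFint : ∀ k, IntegrableOn (F k) (Ioi 0) := fun k =>
    IntegrableOn.congr_fun ((integrableOn_rpow_mul_exp_neg_mul_rpow (s := 2 * (k : ℝ) + lam) (p := 2)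
      (b := 1 / (4 * t)) (neg_one_lt_zero.trans_le (by positivity)) two_pos
      (by positivity)).const_mul _)
      (fun y hy => (heatKernel_term_eq ht hx hy k).symm) measurableSet_Ioi
  have hFval : ∀ k, ∫ y in Ioi (0 : ℝ), F k y =
      (exp (-w) * w ^ (lam / 2) / Gamma (lam / 2)) *
      (w ^ k / k.factorial * (Gamma (lam / 2) * Gamma (k + (lam / 2 + 1 / 2)) /
        Gamma (lam / 2 + (k + (lam / 2 + 1 / 2))))) := fun k => by
    rw [hw, ← heatKernel_term_coeff_mul_integral hlam ht hx k,
      ← integral_rpow_mul_exp_neg_mul_rpow two_pos (neg_one_lt_zero.trans_le (by positivity))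
        (by positivity), ← integral_const_mul]
    exact setIntegral_congr_fun measurableSet_Ioi fun y hy => heatKernel_term_eq ht hx hy k
  have hFnorm : ∀ k, ∫ y in Ioi (0 : ℝ), ‖F k y‖ = ∫ y in Ioi (0 : ℝ), F k y := fun k => by
    refine setIntegral_congr_fun measurableSet_Ioi fun y hy => norm_of_nonneg ?_
    have hy : 0 < y := hy
    have := Gamma_pos_of_pos (show 0 < (k : ℝ) + (lam - 1 / 2) + 1 by
      have : (0 : ℝ) ≤ k := k.cast_nonneg
      linarith)
    positivity
  have h1 := hasSum_integral_of_summable_integral_norm hFint (by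
    simp only [hFnorm, hFval]
    exact hs2.summable)
  simp only [hFval] at h1
  have h2 : heatOne lam t x = ∫ y in Ioi (0 : ℝ), ∑' k, F k y := by
    simp only [heatOne, besselHeatKernel, besselI, hF, tsum_mul_left, tsum_mul_right]
  rw [h2, h1.unique hs2, exp_neg]
  field_simp

theorem integrableOn_heatOne_sub_one {lam σ x : ℝ} (hlam : 0 < lam) (hσ0 : 0 < σ) (hσ1 : σ < 1)
    (hx : 0 < x) :
    IntegrableOn (fun t => (heatOne lam t x - 1) * t ^ (-1 - σ)) (Ioi 0) := by
  obtain ⟨M, hM, hbd⟩ := exists_abs_betaLaplace_sub_one_le (a := lam / 2) (b := lam / 2 + 1 / 2)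
    (by positivity) (by positivity)
  have hb : ∀ t : ℝ, 0 < t → |heatOne lam t x - 1| ≤ M ∧
      |heatOne lam t x - 1| ≤ 4 * M / x ^ 2 * t := fun t ht => by
    have h := hbd (x ^ 2 / (4 * t)) (by positivity)
    rw [← heatOne_eq hlam ht hx] at h
    refine ⟨h.1, h.2.trans_eq ?_⟩
    field_simp
  have hmeas : ∀ s ⊆ Ioi (0 : ℝ), MeasurableSet s → AEStronglyMeasurable
      (fun t => (heatOne lam t x - 1) * t ^ (-1 - σ)) (volume.restrict s) := fun s hs hsm => by
    have hm : Measurable fun t : ℝ => ((x ^ 2 / (4 * t)) ^ (lam / 2) / Gamma (lam / 2) *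
        betaLaplace (lam / 2) (lam / 2 + 1 / 2) (x ^ 2 / (4 * t)) - 1) * t ^ (-1 - σ) := by
      have := measurable_betaLaplace (lam / 2) (lam / 2 + 1 / 2)
      fun_prop
    refine hm.aestronglyMeasurable.congr ?_
    filter_upwards [ae_restrict_mem hsm] with t ht
    rw [heatOne_eq hlam (hs ht) hx]
  rw [← Ioc_union_Ioi_eq_Ioi (zero_le_one' ℝ)]
  refine IntegrableOn.union ?_ ?_
  · have hi : IntegrableOn (fun t : ℝ => 4 * M / x ^ 2 * t ^ (-σ)) (Ioc 0 1) :=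
      ((intervalIntegral.intervalIntegrable_rpow' (by linarith : -1 < -σ)).1).const_mul _
    refine hi.mono' (hmeas _ Ioc_subset_Ioi_self measurableSet_Ioc) ?_
    filter_upwards [ae_restrict_mem measurableSet_Ioc] with t ht
    have ht0 : 0 < t := ht.1
    rw [norm_mul, norm_of_nonneg (r := t ^ (-1 - σ)) (by positivity), norm_eq_abs,
      show -σ = 1 + (-1 - σ) by ring, rpow_add ht0, rpow_one, ← mul_assoc]
    gcongr
    exact (hb t ht0).2
  · have hi : IntegrableOn (fun t : ℝ => M * t ^ (-1 - σ)) (Ioi 1) :=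
      (integrableOn_Ioi_rpow_of_lt (by linarith) one_pos).const_mul _
    refine hi.mono' (hmeas _ (Ioi_subset_Ioi zero_le_one) measurableSet_Ioi) ?_
    filter_upwards [ae_restrict_mem measurableSet_Ioi] with t ht
    have ht0 : 0 < t := one_pos.trans ht
    rw [norm_mul, norm_of_nonneg (r := t ^ (-1 - σ)) (by positivity), norm_eq_abs]
    gcongr
    exact (hb t ht0).1

/-- The function `B_σ^λ` is homogeneous of degree `-2σ`. -/
theorem fracFunB_eq {lam σ x : ℝ} (hlam : 0 < lam) (hx : 0 < x) :
    fracFunB lam σ x = fracFunB lam σ 1 * x ^ (-(2 * σ)) := by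
  have hscale : ∀ t ∈ Ioi (0 : ℝ), (heatOne lam t x - 1) * t ^ (-1 - σ) =
      (x ^ (-2 : ℝ)) ^ (1 + σ) *
        ((heatOne lam (x ^ (-2 : ℝ) * t) 1 - 1) * (x ^ (-2 : ℝ) * t) ^ (-1 - σ)) := by
    intro t ht
    have ht : 0 < t := ht
    have hb : 0 < x ^ (-2 : ℝ) := by positivity
    have e : (1 : ℝ) ^ 2 / (4 * (x ^ (-2 : ℝ) * t)) = x ^ 2 / (4 * t) := by
      rw [rpow_neg hx.le, rpow_two]; field_simp
    rw [heatOne_eq hlam ht hx, heatOne_eq hlam (by positivity) one_pos, e,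
      mul_rpow hb.le ht.le, show -1 - σ = -(1 + σ) by ring, rpow_neg hb.le]
    have : 0 < (x ^ (-2 : ℝ)) ^ (1 + σ) := by positivity
    field_simp
  have hb : 0 < x ^ (-2 : ℝ) := by positivity
  have hI := integral_comp_mul_left_Ioi
    (fun t => (heatOne lam t 1 - 1) * t ^ (-1 - σ)) 0 hb
  rw [mul_zero, smul_eq_mul] at hI
  have hpow : (x ^ (-2 : ℝ)) ^ (1 + σ) * (x ^ (-2 : ℝ))⁻¹ = x ^ (-(2 * σ)) := by
    rw [← rpow_neg_one, ← rpow_add hb, ← rpow_mul hx.le]; congr 1; ring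
  rw [fracFunB, fracFunB, setIntegral_congr_fun measurableSet_Ioi hscale, integral_const_mul, hI,
    ← hpow]
  ring

theorem besselHeatKernel_mul_rpow_le {lam σ C t x y : ℝ}
    (hC : ∀ t x y : ℝ, 0 < t → 0 < x → 0 < y →
      besselHeatKernel lam t x y ≤ C * (t ^ (-(1 / 2) : ℝ) * exp (-(x - y) ^ 2 / (4 * t))))
    (ht : 0 < t) (hx : 0 < x) (hy : 0 < y) :
    besselHeatKernel lam t x y * t ^ (-1 - σ) ≤
      C * (t ^ (-(1 / 2) : ℝ) * exp (-((x - y) ^ 2 / 4) / t) * t ^ (-1 - σ)) := by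
  have h := hC t x y ht hx hy
  rw [show -(x - y) ^ 2 / (4 * t) = -((x - y) ^ 2 / 4) / t by field_simp] at h
  rw [← mul_assoc]
  gcongr

theorem integrableOn_besselHeatKernel_mul_rpow {lam σ x y : ℝ} (hlam : 0 < lam) (hσ : 0 < σ)
    (hx : 0 < x) (hy : 0 < y) (hxy : x ≠ y) :
    IntegrableOn (fun t => besselHeatKernel lam t x y * t ^ (-1 - σ)) (Ioi 0) := by
  obtain ⟨C, -, hbd⟩ := exists_besselHeatKernel_le hlam
  have hr : 0 < (x - y) ^ 2 / 4 := by
    have := sub_ne_zero.2 hxy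
    positivity
  refine ((integrableOn_rpow_mul_exp_neg_inv hσ hr).const_mul C).mono'
    ((aestronglyMeasurable_besselHeatKernel hlam hx hy).mul
      (Measurable.aestronglyMeasurable (by fun_prop))) ?_
  filter_upwards [ae_restrict_mem measurableSet_Ioi] with t ht
  have ht : 0 < t := ht
  rw [norm_of_nonneg (mul_nonneg (besselHeatKernel_nonneg hlam ht hx hy) (by positivity))]
  exact besselHeatKernel_mul_rpow_le hbd ht hx hy

theorem fracKernelK_nonneg {lam σ x y : ℝ} (hlam : 0 < lam) (hσ0 : 0 < σ) (hσ1 : σ < 1)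
    (hx : 0 < x) (hy : 0 < y) : 0 ≤ fracKernelK lam σ x y := by
  have hγ := gammaNeg_neg hσ0 hσ1
  refine mul_nonneg (one_div_nonneg.2 (by linarith)) (setIntegral_nonneg measurableSet_Ioi
    fun t ht => mul_nonneg (besselHeatKernel_nonneg hlam ht hx hy) (rpow_nonneg (le_of_lt ht) _))

theorem exists_fracKernelK_le {lam σ : ℝ} (hlam : 0 < lam) (hσ0 : 0 < σ) (hσ1 : σ < 1) :
    ∃ C : ℝ, 0 < C ∧ ∀ x y : ℝ, 0 < x → 0 < y → x ≠ y →
      fracKernelK lam σ x y ≤ C * |x - y| ^ (-1 - 2 * σ) := by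
  obtain ⟨C, hC, hbd⟩ := exists_besselHeatKernel_le hlam
  have hγ : 0 < -gammaNeg σ := by linarith [gammaNeg_neg hσ0 hσ1]
  have hG := Gamma_pos_of_pos (show 0 < σ + 1 / 2 by linarith)
  refine ⟨1 / (-gammaNeg σ) * (C * (4 ^ (σ + 1 / 2) * Gamma (σ + 1 / 2))), by positivity,
    fun x y hx hy hxy => ?_⟩
  have hd : 0 < |x - y| := abs_pos.2 (sub_ne_zero.2 hxy)
  have hr : 0 < (x - y) ^ 2 / 4 := by rw [← sq_abs]; positivity
  have hpow : (1 / ((x - y) ^ 2 / 4)) ^ (σ + 1 / 2) =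
      4 ^ (σ + 1 / 2) * |x - y| ^ (-1 - 2 * σ) := by
    rw [← sq_abs, one_div_div, div_rpow (by norm_num) (by positivity), ← rpow_two,
      ← rpow_mul hd.le, div_eq_mul_inv, ← rpow_neg hd.le]
    congr 2; ring
  have h := setIntegral_mono_on (integrableOn_besselHeatKernel_mul_rpow hlam hσ0 hx hy hxy)
    ((integrableOn_rpow_mul_exp_neg_inv hσ0 hr).const_mul C) measurableSet_Ioi
    fun t ht => besselHeatKernel_mul_rpow_le hbd ht hx hy
  rw [integral_const_mul, integral_rpow_mul_exp_neg_inv hσ0 hr, hpow] at h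
  calc fracKernelK lam σ x y ≤ 1 / (-gammaNeg σ) *
        (C * (4 ^ (σ + 1 / 2) * |x - y| ^ (-1 - 2 * σ) * Gamma (σ + 1 / 2))) := by
        unfold fracKernelK; gcongr
    _ = _ := by ring

/-- Absolute convergence and estimates for `K_σ^λ` and `B_σ^λ`. -/
theorem kernel_and_B_estimates (lam σ : ℝ) (hlam : 0 < lam) (hσ0 : 0 < σ) (hσ1 : σ < 1) :
    (∀ x y : ℝ, 0 < x → 0 < y → x ≠ y →
      IntegrableOn (fun t => besselHeatKernel lam t x y * t ^ (-1 - σ)) (Set.Ioi 0)) ∧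
    (∀ x : ℝ, 0 < x →
      IntegrableOn (fun t => (heatOne lam t x - 1) * t ^ (-1 - σ)) (Set.Ioi 0)) ∧
    ∃ C : ℝ, 0 < C ∧
      (∀ x y : ℝ, 0 < x → 0 < y → x ≠ y →
        0 ≤ fracKernelK lam σ x y ∧ fracKernelK lam σ x y ≤ C * |x - y| ^ (-1 - 2 * σ)) ∧
      (∀ x : ℝ, 0 < x → |fracFunB lam σ x| ≤ C * x ^ (-(2 * σ))) ∧
      ContinuousOn (fracFunB lam σ) (Set.Ioi 0) := by
  obtain ⟨C, hC, hK⟩ := exists_fracKernelK_le hlam hσ0 hσ1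
  refine ⟨fun x y hx hy hxy => integrableOn_besselHeatKernel_mul_rpow hlam hσ0 hx hy hxy,
    fun x hx => integrableOn_heatOne_sub_one hlam hσ0 hσ1 hx,
    C + |fracFunB lam σ 1|, by positivity, fun x y hx hy hxy =>
      ⟨fracKernelK_nonneg hlam hσ0 hσ1 hx hy, (hK x y hx hy hxy).trans ?_⟩, fun x hx => ?_, ?_⟩
  · gcongr
    linarith [abs_nonneg (fracFunB lam σ 1)]
  · rw [fracFunB_eq hlam hx, abs_mul, abs_of_nonneg (a := x ^ (-(2 * σ))) (by positivity)]
    gcongr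
    linarith
  · refine ContinuousOn.congr (f := fun x => fracFunB lam σ 1 * x ^ (-(2 * σ))) ?_
      fun x hx => fracFunB_eq hlam hx
    exact continuousOn_const.mul
      (continuousOn_id.rpow_const fun x hx => Or.inl (ne_of_gt hx))
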